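/- arXiv:1412.4805 — 9 statements merged into one kernel-verified Lean document; each statement's English description precedes it below -/
import Mathlib

section
/- Let N ≥ 1 and let x, y ∈ ℝ^N have nonnegative components. If x is strongly majorized by y (x ≪ y), then x is weakly majorized by y (x ≺* y). -/
/-!
Write `p`, `q` for the sums of the `k` largest components of `x`, `y`, and `X ≤ Y` for the total
sums. For `k < N` the term `p * q` cancels from the inequality `p * (Y - q) ≤ q * (X - p)`, leaving
`p * Y ≤ q * X ≤ q * Y`, so `p ≤ q` when `Y > 0`. When `Y = 0`, nonnegativity gives
`p ≤ X ≤ 0 ≤ q`. For `k = N` the claim is `X ≤ Y` itself, because the decreasing rearrangement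
has the same sum as the vector.
-/

open Finset

/-- The decreasing rearrangement of `x`: `sortedDesc x i` is the `(i+1)`-th largest
component of the vector `x`. -/
noncomputable def sortedDesc {N : ℕ} (x : Fin N → ℝ) : Fin N → ℝ :=
  fun i => x (Tuple.sort x i.rev)

/-- `partSum x k = ∑_{i=1}^{k} x_[i]`, the sum of the `k` largest components of `x`. -/
noncomputable def partSum {N : ℕ} (x : Fin N → ℝ) (k : ℕ) : ℝ :=
  ∑ i ∈ Finset.univ.filter (fun i : Fin N => (i : ℕ) < k), sortedDesc x i

/-- `x ≺* y`: `x` is weakly majorized by `y`. -/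
def WeaklyMajorized {N : ℕ} (x y : Fin N → ℝ) : Prop :=
  ∀ k, 1 ≤ k → k ≤ N → partSum x k ≤ partSum y k

/-- `x ≪ y`: `x` is strongly majorized by `y`, i.e. for each `k = 1, …, N-1`,
`(∑_{i=1}^k x_[i]) (∑_{i=k+1}^N y_[i]) ≤ (∑_{i=1}^k y_[i]) (∑_{i=k+1}^N x_[i])`,
and `∑ x_i ≤ ∑ y_i`. -/
def StronglyMajorized {N : ℕ} (x y : Fin N → ℝ) : Prop :=
  (∀ k, 1 ≤ k → k ≤ N - 1 →
    partSum x k * ((∑ i, y i) - partSum y k) ≤ partSum y k * ((∑ i, x i) - partSum x k)) ∧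
  (∑ i, x i) ≤ (∑ i, y i)

lemma sum_sortedDesc {N : ℕ} (x : Fin N → ℝ) : ∑ i, sortedDesc x i = ∑ i, x i :=
  Equiv.sum_comp (Fin.revPerm.trans (Tuple.sort x)) x

lemma partSum_self {N : ℕ} (x : Fin N → ℝ) : partSum x N = ∑ i, x i := by
  rw [← sum_sortedDesc, partSum, Finset.filter_true_of_mem fun i _ => i.isLt]

lemma partSum_nonneg {N : ℕ} {x : Fin N → ℝ} (hx : ∀ i, 0 ≤ x i) (k : ℕ) : 0 ≤ partSum x k :=
  Finset.sum_nonneg fun _ _ => hx _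

lemma partSum_le_sum {N : ℕ} {x : Fin N → ℝ} (hx : ∀ i, 0 ≤ x i) (k : ℕ) :
    partSum x k ≤ ∑ i, x i := by
  rw [← sum_sortedDesc]
  exact Finset.sum_le_sum_of_subset_of_nonneg (Finset.filter_subset _ _) fun _ _ _ => hx _

theorem strongly_majorized_implies_weakly_majorized {N : ℕ} (hN : 1 ≤ N)
    (x y : Fin N → ℝ) (hx : ∀ i, 0 ≤ x i) (hy : ∀ i, 0 ≤ y i)
    (h : StronglyMajorized x y) : WeaklyMajorized x y := by
  obtain ⟨hcross, hsum⟩ := h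
  intro k hk1 hkN
  rcases hkN.eq_or_lt with rfl | hlt
  · simpa only [partSum_self] using hsum
  have hc := hcross k hk1 (by omega)
  have hq := partSum_nonneg hy k
  have hpX := partSum_le_sum hx k
  rcases (Finset.sum_nonneg fun i _ => hy i : 0 ≤ ∑ i, y i).eq_or_lt with hY | hY
  · linarith
  · have hqXY := mul_le_mul_of_nonneg_left hsum hq
    exact le_of_mul_le_mul_right (by linarith) hY
end

section
/- (Generalized Hardy–Littlewood–Pólya inequality.) Let N ≥ 1 and let x, y ∈ ℝ^N have nonnegative components with ∑_{i=1}^N y_i > 0, and suppose x ≪ y. Set α = (∑_{i=1}^N x_i)/(∑_{i=1}^N y_i). Then for every function f : ℝ → ℝ that is convex on [0,∞), (f(x_1)+⋯+f(x_N))/N ≤ α·(f(y_1)+⋯+f(y_N))/N + (1−α)·f(0). -/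
/-!
Let `α = (∑ x_i)/(∑ y_i) ∈ [0,1]`. The `k`-th strong majorization inequality, after adding
`partSum x k * partSum y k` to both sides and dividing by `∑ y_i`, says
`partSum x k ≤ α * partSum y k`; so `x` is majorized by `α y` in the classical sense, with equal
total sums. The Hardy–Littlewood–Pólya inequality
then gives `∑ f (x_i) ≤ ∑ f (α y_i)`, and convexity gives
`f (α y_i) ≤ α f (y_i) + (1 - α) f 0`, which is the claim.

The classical inequality is proved by supporting lines: if `c a` is a slope at `a` of a line
supporting `f`, then `∑ (f (b_i) - f (a_i)) ≥ ∑ c (a_i) (b_i - a_i)`, and the latter is nonnegative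
by Abel summation (`abel_bound`), since the `c (a_i)` decrease along the decreasing rearrangement.
A function convex on `[0,∞)` need not have a supporting line at `0` (it may jump there, or have
slope `-∞`), but lines that support it on a given finite set always exist
(`exists_support_slope`), and these suffice.
-/

open Finset

/-- A function convex on `[0,∞)` has, at each point `a ≥ 0`, a line through `(a, f a)` lying below
`f` on any prescribed finite set of points: its slope separates the finitely many secant slopes
to the left of `a` from those to the right. -/
lemma exists_support_slope {f : ℝ → ℝ} (hf : ConvexOn ℝ (Set.Ici 0) f) (S : Finset ℝ)
    (hS : ∀ s ∈ S, 0 ≤ s) (a : ℝ) :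
    ∃ c : ℝ, 0 ≤ a → ∀ b ∈ S, f a + c * (b - a) ≤ f b := by
  by_cases ha : 0 ≤ a
  swap
  · exact ⟨0, fun h => absurd h ha⟩
  let q : ℝ → ℝ := fun b => (f b - f a) / (b - a)
  let L := (S.filter (· < a)).image q
  let R := (S.filter (a < ·)).image q
  have hLR : ∀ l ∈ L, ∀ r ∈ R, l ≤ r := by
    intro l hl r hr
    obtain ⟨u, hu, rfl⟩ := Finset.mem_image.1 hl
    obtain ⟨v, hv, rfl⟩ := Finset.mem_image.1 hr
    rw [Finset.mem_filter] at hu hv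
    have := hf.slope_mono_adjacent (hS u hu.1) (hS v hv.1) hu.2 hv.2
    have e : q u = (f a - f u) / (a - u) := by
      simp only [q]; rw [← neg_sub, ← neg_sub a u, neg_div_neg_eq]
    rw [e]; exact this
  have hc : ∃ c, (∀ l ∈ L, l ≤ c) ∧ ∀ r ∈ R, c ≤ r := by
    rcases R.eq_empty_or_nonempty with hR | hR
    · obtain ⟨c, hc⟩ := L.bddAbove
      exact ⟨c, fun l hl => hc hl, by simp [hR]⟩
    · exact ⟨R.min' hR, fun l hl => hLR l hl _ (R.min'_mem hR), fun r hr => R.min'_le r hr⟩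
  obtain ⟨c, hcL, hcR⟩ := hc
  refine ⟨c, fun _ b hb => ?_⟩
  rcases lt_trichotomy b a with h | h | h
  · have := hcL (q b) (Finset.mem_image_of_mem q (Finset.mem_filter.2 ⟨hb, h⟩))
    have := (div_le_iff_of_neg (sub_neg.2 h)).1 this
    linarith
  · simp [h]
  · have := hcR (q b) (Finset.mem_image_of_mem q (Finset.mem_filter.2 ⟨hb, h⟩))
    have := (le_div_iff₀ (sub_pos.2 h)).1 this
    linarith

/-- Abel summation bound: for decreasing weights and nonnegative partial sums, a weighted sum
only decreases when every weight is replaced by the last one. -/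
lemma abel_bound (c d : ℕ → ℝ) (n : ℕ) (hc : ∀ i < n, c (i + 1) ≤ c i)
    (hd : ∀ k ≤ n, 0 ≤ ∑ i ∈ range k, d i) :
    c n * ∑ i ∈ range (n + 1), d i ≤ ∑ i ∈ range (n + 1), c i * d i := by
  induction n with
  | zero => simp
  | succ n ih =>
    have h1 := ih (fun i hi => hc i (by omega)) (fun k hk => hd k (by omega))
    have h2 := mul_le_mul_of_nonneg_right (hc n (by omega)) (hd (n + 1) le_rfl)
    rw [Finset.sum_range_succ d, Finset.sum_range_succ (fun i => c i * d i), mul_add]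
    linarith

/-- Hardy–Littlewood–Pólya inequality for a decreasing sequence `a` majorized by `b`. The sequence
`b` need not be monotone. -/
lemma hardy_littlewood_polya_seq {f : ℝ → ℝ} (hf : ConvexOn ℝ (Set.Ici 0) f) (a b : ℕ → ℝ)
    (ha : ∀ i, 0 ≤ a i) (hb : ∀ i, 0 ≤ b i) (n : ℕ) (hanti : ∀ i < n, a (i + 1) ≤ a i)
    (hle : ∀ k ≤ n, ∑ i ∈ range k, a i ≤ ∑ i ∈ range k, b i)
    (heq : ∑ i ∈ range (n + 1), a i = ∑ i ∈ range (n + 1), b i) :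
    ∑ i ∈ range (n + 1), f (a i) ≤ ∑ i ∈ range (n + 1), f (b i) := by
  let S := (range (n + 1)).image a ∪ (range (n + 1)).image b
  have hS : ∀ s ∈ S, 0 ≤ s := by
    intro s hs
    rcases Finset.mem_union.1 hs with h | h
    · obtain ⟨i, -, rfl⟩ := Finset.mem_image.1 h
      exact ha i
    · obtain ⟨i, -, rfl⟩ := Finset.mem_image.1 h
      exact hb i
  have haS : ∀ i < n + 1, a i ∈ S := fun i hi =>
    Finset.mem_union_left _ (Finset.mem_image_of_mem a (Finset.mem_range.2 hi))
  have hbS : ∀ i < n + 1, b i ∈ S := fun i hi =>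
    Finset.mem_union_right _ (Finset.mem_image_of_mem b (Finset.mem_range.2 hi))
  -- `c` depends only on the point, so equal values `a i = a j` get equal slopes.
  choose c hc using exists_support_slope hf S hS
  -- Two lines supporting `f` at points of `S`, each lying below `f` at the other's contact point,
  -- have slopes ordered as the points.
  have hmono : ∀ i < n, c (a (i + 1)) ≤ c (a i) := by
    intro i hi
    rcases (hanti i hi).eq_or_lt with h | h
    · rw [h]
    · have h1 := hc (a i) (ha i) _ (haS (i + 1) (by omega))
      have h2 := hc (a (i + 1)) (ha _) _ (haS i (by omega))
      by_contra! hlt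
      nlinarith [mul_pos (sub_pos.2 hlt) (sub_pos.2 h)]
  have habel := abel_bound (fun i => c (a i)) (fun i => b i - a i) n hmono (by
    intro k hk
    rw [Finset.sum_sub_distrib]
    linarith [hle k hk])
  have hzero : ∑ i ∈ range (n + 1), (b i - a i) = 0 := by
    rw [Finset.sum_sub_distrib, heq, sub_self]
  rw [hzero, mul_zero] at habel
  have hsum : ∑ i ∈ range (n + 1), (f (a i) + c (a i) * (b i - a i)) ≤
      ∑ i ∈ range (n + 1), f (b i) :=
    Finset.sum_le_sum fun i hi => hc (a i) (ha i) _ (hbS i (Finset.mem_range.1 hi))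
  rw [Finset.sum_add_distrib] at hsum
  linarith

/-- The decreasing rearrangement of `x` as a sequence indexed by `ℕ`, extended by `0`. -/
noncomputable def descSeq {N : ℕ} (x : Fin N → ℝ) (i : ℕ) : ℝ :=
  if h : i < N then sortedDesc x ⟨i, h⟩ else 0

lemma descSeq_nonneg {N : ℕ} {x : Fin N → ℝ} (hx : ∀ i, 0 ≤ x i) (i : ℕ) :
    0 ≤ descSeq x i := by
  unfold descSeq
  split_ifs
  · exact hx _
  · exact le_rfl

lemma descSeq_succ_le {N : ℕ} (x : Fin N → ℝ) (i : ℕ) (hi : i + 1 < N) :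
    descSeq x (i + 1) ≤ descSeq x i := by
  have hi' : i < N := by omega
  simp only [descSeq, hi, hi', dif_pos, sortedDesc]
  refine Tuple.monotone_sort x (Fin.rev_le_rev.2 ?_)
  simp [Fin.le_def]

lemma sum_descSeq {N : ℕ} (x : Fin N → ℝ) (g : ℝ → ℝ) :
    ∑ i ∈ range N, g (descSeq x i) = ∑ i, g (x i) := by
  rw [Finset.sum_range]
  simp only [descSeq, Fin.is_lt, dif_pos, sortedDesc, Fin.eta]
  exact Equiv.sum_comp (Fin.revPerm.trans (Tuple.sort x)) (fun i => g (x i))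

lemma partSum_eq {N : ℕ} (x : Fin N → ℝ) (k : ℕ) (hk : k ≤ N) :
    partSum x k = ∑ i ∈ range k, descSeq x i := by
  have h : range k = (range N).filter (· < k) := by
    ext i
    simp only [Finset.mem_range, Finset.mem_filter]
    omega
  rw [h, Finset.sum_filter, Finset.sum_range, partSum, Finset.sum_filter]
  simp [descSeq]

/-- Generalized Hardy–Littlewood–Pólya inequality: if `x ≪ y` and
`α = (∑ x_i)/(∑ y_i)`, then for every function `f` convex on `[0,∞)`,
`(f(x₁)+⋯+f(x_N))/N ≤ α (f(y₁)+⋯+f(y_N))/N + (1-α) f(0)`. -/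
theorem generalized_hardy_littlewood_polya {N : ℕ} (hN : 1 ≤ N)
    (x y : Fin N → ℝ) (hx : ∀ i, 0 ≤ x i) (hy : ∀ i, 0 ≤ y i)
    (hpos : 0 < ∑ i, y i) (h : StronglyMajorized x y)
    (f : ℝ → ℝ) (hf : ConvexOn ℝ (Set.Ici 0) f) :
    (∑ i, f (x i)) / N ≤
      ((∑ i, x i) / (∑ i, y i)) * ((∑ i, f (y i)) / N)
        + (1 - (∑ i, x i) / (∑ i, y i)) * f 0 := by
  obtain ⟨hk, htot⟩ := h
  set α := (∑ i, x i) / (∑ i, y i) with hα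
  have hα0 : 0 ≤ α := div_nonneg (Finset.sum_nonneg fun i _ => hx i) hpos.le
  have hα1 : α ≤ 1 := (div_le_one hpos).2 htot
  have hαy : α * ∑ i, y i = ∑ i, x i := div_mul_cancel₀ _ hpos.ne'
  obtain ⟨n, rfl⟩ : ∃ n, N = n + 1 := ⟨N - 1, by omega⟩
  have hhlp : ∑ i ∈ range (n + 1), f (descSeq x i) ≤
      ∑ i ∈ range (n + 1), f (α * descSeq y i) := by
    refine hardy_littlewood_polya_seq hf _ _ (descSeq_nonneg hx)
      (fun i => mul_nonneg hα0 (descSeq_nonneg hy i)) n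
      (fun i hi => descSeq_succ_le x i (by omega)) ?_ ?_
    · intro k hkn
      rcases Nat.eq_zero_or_pos k with rfl | hk0
      · simp
      · have := hk k hk0 (by omega)
        rw [← Finset.mul_sum, ← partSum_eq x k (by omega), ← partSum_eq y k (by omega), hα,
          div_mul_eq_mul_div, le_div_iff₀ hpos]
        linarith
    · rw [← Finset.mul_sum]
      exact (sum_descSeq x id).trans (hαy.symm.trans (congrArg (α * ·) (sum_descSeq y id).symm))
  rw [sum_descSeq x f, sum_descSeq y (fun t => f (α * t))] at hhlp
  have hconv : ∑ i, f (α * y i) ≤ ∑ i, (α * f (y i) + (1 - α) * f 0) := by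
    refine Finset.sum_le_sum fun i _ => ?_
    have := hf.2 (hy i) (Set.mem_Ici.2 le_rfl) hα0 (sub_nonneg.2 hα1) (by ring)
    simpa using this
  rw [Finset.sum_add_distrib, ← Finset.mul_sum, Finset.sum_const, Finset.card_univ,
    Fintype.card_fin, nsmul_eq_mul] at hconv
  have hNpos : (0 : ℝ) < ((n + 1 : ℕ) : ℝ) := by positivity
  rw [div_le_iff₀ hNpos, add_mul, mul_assoc, div_mul_cancel₀ _ hNpos.ne']
  linarith
end

section
/- (Schur–Ostrowski criterion.) Let I ⊂ ℝ be an open interval and let F : I^N → ℝ be a symmetric function with continuous partial derivatives on I^N. Then F is Schur-convex on I^N if and only if for all x ∈ I^N and all indices i, j ∈ {1,…,N}, (x_i − x_j)·(∂F/∂x_i (x) − ∂F/∂x_j (x)) ≥ 0. -/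
/-!
The function `F` is differentiable on the open convex box `I^N`, and both directions come down to
the derivative of `F` along a line.

If `F` is Schur-convex and `x j < x i`, moving a small mass `t` from coordinate `i` to
coordinate `j` produces a vector majorized by `x` (`majorized_transfer`), so the derivative of `F`
in the direction `e_j - e_i` is nonpositive. The majorization follows from the description of
`partSum x k` as the maximum of `∑ i ∈ T, x i` over `k`-element sets `T`.

Conversely, by symmetry of `F` vectors `x ≺ y` may be replaced by their decreasing rearrangements.
All points of the segment from `x` to `y` are then decreasing vectors, and at a decreasing
vector `z` the gradient of `F` is decreasing too: the criterion gives this where `z j < z i`, and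
where `z i = z j` the symmetry of `F` makes the two partial derivatives equal
(`fderiv_single_eq_of_symm`). Summation by parts (`sum_mul_nonneg_of_antitone`) turns the
majorization inequalities into `0 ≤ DF(z) (y - x)`, so `F` increases along the segment.
-/

open Finset

/-- `x ≺ y`: `x` is majorized by `y`. -/
def Majorized {N : ℕ} (x y : Fin N → ℝ) : Prop :=
  WeaklyMajorized x y ∧ (∑ i, x i) = (∑ i, y i)

lemma sortedDesc_antitone {N : ℕ} (x : Fin N → ℝ) : Antitone (sortedDesc x) := by
  intro i j hij
  exact Tuple.monotone_sort x (Fin.rev_le_rev.2 hij)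

lemma sortedDesc_eq_comp {N : ℕ} (x : Fin N → ℝ) :
    ∃ σ : Equiv.Perm (Fin N), sortedDesc x = x ∘ σ :=
  ⟨Fin.revPerm.trans (Tuple.sort x), rfl⟩

lemma card_filter_lt {N k : ℕ} (hk : k ≤ N) :
    (univ.filter (fun i : Fin N => (i : ℕ) < k)).card = k := by
  rw [Fin.card_filter_val_lt, min_eq_right hk]

/-- The first `k` entries of a decreasing vector have the largest sum among `k`-element sets. -/
lemma sum_le_sum_initial {N k : ℕ} (hk1 : 1 ≤ k) (hk : k ≤ N) (z : Fin N → ℝ) (hz : Antitone z)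
    (T : Finset (Fin N)) (hT : T.card = k) :
    ∑ i ∈ T, z i ≤ ∑ i ∈ univ.filter (fun i : Fin N => (i : ℕ) < k), z i := by
  set A := univ.filter (fun i : Fin N => (i : ℕ) < k) with hA
  have hAc : A.card = k := card_filter_lt hk
  -- Subtracting the `k`-th entry makes `z` nonnegative on `A` and nonpositive off `A`.
  set c := z ⟨k - 1, by omega⟩ with hc
  have h : ∑ i ∈ T, (z i - c) ≤ ∑ i ∈ A, (z i - c) := by
    rw [← Finset.sum_inter_add_sum_sdiff T A, ← Finset.sum_inter_add_sum_sdiff A T,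
      Finset.inter_comm A T]
    have h1 : ∑ i ∈ T \ A, (z i - c) ≤ 0 := by
      refine Finset.sum_nonpos fun i hi => ?_
      simp only [hA, mem_sdiff, mem_filter, mem_univ, true_and, not_lt] at hi
      have : z i ≤ c := hz (Fin.le_def.2 (by simp only; omega))
      linarith
    have h2 : 0 ≤ ∑ i ∈ A \ T, (z i - c) := by
      refine Finset.sum_nonneg fun i hi => ?_
      simp only [hA, mem_sdiff, mem_filter, mem_univ, true_and] at hi
      have : c ≤ z i := hz (Fin.le_def.2 (by simp only; omega))
      linarith
    linarith
  simp only [Finset.sum_sub_distrib, Finset.sum_const, hT, hAc] at h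
  linarith

lemma sum_le_partSum {N k : ℕ} (hk1 : 1 ≤ k) (hk : k ≤ N) (x : Fin N → ℝ)
    (T : Finset (Fin N)) (hT : T.card = k) : ∑ i ∈ T, x i ≤ partSum x k := by
  obtain ⟨σ, hσ⟩ := sortedDesc_eq_comp x
  have h := sum_le_sum_initial hk1 hk _ (sortedDesc_antitone x) (T.map σ.symm.toEmbedding)
    (by simpa using hT)
  refine le_trans (le_of_eq ?_) h
  simp [hσ]

lemma exists_partSum_eq {N k : ℕ} (hk : k ≤ N) (x : Fin N → ℝ) :
    ∃ T : Finset (Fin N), T.card = k ∧ partSum x k = ∑ i ∈ T, x i := by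
  obtain ⟨σ, hσ⟩ := sortedDesc_eq_comp x
  refine ⟨(univ.filter (fun i : Fin N => (i : ℕ) < k)).map σ.toEmbedding, ?_, ?_⟩
  · rw [card_map, card_filter_lt hk]
  · simp [partSum, hσ]

/-- Moving mass `t ≤ x i - x j` from the larger coordinate `i` to the smaller coordinate `j`
produces a vector majorized by `x`. -/
lemma majorized_transfer {N : ℕ} (x : Fin N → ℝ) {i j : Fin N} {t : ℝ} (ht0 : 0 ≤ t)
    (ht : t ≤ x i - x j) :
    Majorized (x + t • (Pi.single j 1 - Pi.single i 1 : Fin N → ℝ)) x := by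
  have key : ∀ T : Finset (Fin N),
      ∑ l ∈ T, (x + t • (Pi.single j 1 - Pi.single i 1 : Fin N → ℝ)) l
        = ∑ l ∈ T, x l + t * ((if j ∈ T then 1 else 0) - (if i ∈ T then 1 else 0)) := by
    intro T
    simp only [Pi.add_apply, Pi.smul_apply, Pi.sub_apply, smul_eq_mul, Finset.sum_add_distrib,
      ← Finset.mul_sum, Finset.sum_sub_distrib, Pi.single_apply, Finset.sum_ite_eq']
  refine ⟨fun k hk1 hk => ?_, ?_⟩
  · obtain ⟨T, hT, hsum⟩ := exists_partSum_eq hk (x + t • (Pi.single j 1 - Pi.single i 1))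
    rw [hsum, key]
    by_cases hjT : j ∈ T <;> by_cases hiT : i ∈ T
    · have := sum_le_partSum hk1 hk x T hT
      simp [hjT, hiT, this]
    · -- The gain `t` is compensated by exchanging `j` for `i` in the index set.
      have hi' : i ∉ T.erase j := fun h => hiT (Finset.mem_of_mem_erase h)
      have := sum_le_partSum hk1 hk x (insert i (T.erase j)) (by
        rw [Finset.card_insert_of_notMem hi', Finset.card_erase_add_one hjT, hT])
      rw [Finset.sum_insert hi'] at this
      have h2 := Finset.add_sum_erase T x hjT
      simp only [hjT, hiT, if_true, if_false]
      linarith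
    · have := sum_le_partSum hk1 hk x T hT
      simp only [hjT, hiT, if_true, if_false]
      linarith
    · have := sum_le_partSum hk1 hk x T hT
      simp [hjT, hiT, this]
  · rw [key]; simp

/-- Summation by parts as an inequality: with nonnegative partial sums of `d`, a decreasing weight
`g` on an initial segment may be replaced by its last value there. -/
lemma mul_sum_initial_le {N : ℕ} (g d : Fin N → ℝ) (hg : Antitone g)
    (hd : ∀ k, 1 ≤ k → k ≤ N → 0 ≤ ∑ i ∈ univ.filter (fun i : Fin N => (i : ℕ) < k), d i)
    (k : ℕ) (hk : k < N) :
    g ⟨k, hk⟩ * ∑ i ∈ univ.filter (fun i : Fin N => (i : ℕ) < k + 1), d i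
      ≤ ∑ i ∈ univ.filter (fun i : Fin N => (i : ℕ) < k + 1), g i * d i := by
  have hins : ∀ m (hm : m < N), univ.filter (fun i : Fin N => (i : ℕ) < m + 1)
      = insert ⟨m, hm⟩ (univ.filter (fun i : Fin N => (i : ℕ) < m)) := by
    intro m hm
    ext i
    simp only [mem_filter, mem_univ, true_and, mem_insert, Fin.ext_iff]
    omega
  induction k with
  | zero => rw [hins 0 hk]; simp
  | succ k ih =>
    have ih := ih (by omega)
    rw [hins (k + 1) hk, Finset.sum_insert (by simp), Finset.sum_insert (by simp)]
    have h1 : g ⟨k + 1, hk⟩ ≤ g ⟨k, by omega⟩ := hg (Fin.le_def.2 (by simp))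
    have h2 := mul_le_mul_of_nonneg_right h1 (hd (k + 1) (by omega) (by omega))
    linarith

lemma sum_mul_nonneg_of_antitone {N : ℕ} (g d : Fin N → ℝ) (hg : Antitone g)
    (hd : ∀ k, 1 ≤ k → k ≤ N → 0 ≤ ∑ i ∈ univ.filter (fun i : Fin N => (i : ℕ) < k), d i)
    (hd0 : ∑ i, d i = 0) : 0 ≤ ∑ i, g i * d i := by
  cases N with
  | zero => simp
  | succ n =>
    have h := mul_sum_initial_le g d hg hd n (Nat.lt_succ_self n)
    have hu : univ.filter (fun i : Fin (n + 1) => (i : ℕ) < n + 1) = univ :=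
      Finset.filter_true_of_mem fun i _ => i.isLt
    rw [hu, hd0, mul_zero] at h
    exact h

lemma hasDerivAt_line {N : ℕ} {F : (Fin N → ℝ) → ℝ} {x v : Fin N → ℝ} {t : ℝ}
    (h : DifferentiableAt ℝ F (x + t • v)) :
    HasDerivAt (fun s : ℝ => F (x + s • v)) (fderiv ℝ F (x + t • v) v) t := by
  have hl : HasDerivAt (fun s : ℝ => x + s • v) v t := by
    simpa using ((hasDerivAt_id t).smul_const v).const_add x
  exact h.hasFDerivAt.comp_hasDerivAt t hl

/-- A symmetric function has equal partial derivatives in the directions of equal coordinates. -/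
lemma fderiv_single_eq_of_symm {N : ℕ} {F : (Fin N → ℝ) → ℝ}
    (hsymm : ∀ (σ : Equiv.Perm (Fin N)) (x : Fin N → ℝ), F (x ∘ σ) = F x)
    {x : Fin N → ℝ} (hx : DifferentiableAt ℝ F x) {i j : Fin N} (hij : x i = x j) :
    fderiv ℝ F x (Pi.single i 1) = fderiv ℝ F x (Pi.single j 1) := by
  have hd : ∀ v : Fin N → ℝ, HasDerivAt (fun s : ℝ => F (x + s • v)) (fderiv ℝ F x v) 0 := by
    intro v
    have := hasDerivAt_line (F := F) (x := x) (v := v) (t := 0) (by simpa using hx)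
    simpa using this
  have heq : (fun s : ℝ => F (x + s • (Pi.single i 1 : Fin N → ℝ)))
      = fun s : ℝ => F (x + s • (Pi.single j 1 : Fin N → ℝ)) := by
    funext s
    rw [← hsymm (Equiv.swap i j)]
    congr 1
    ext l
    simp only [Function.comp, Pi.add_apply, Pi.smul_apply, Pi.single_apply, smul_eq_mul]
    rcases eq_or_ne l i with rfl | hli
    · by_cases h : j = l <;> simp_all [eq_comm]
    · rcases eq_or_ne l j with rfl | hlj
      · simp [hij]
      · simp [Equiv.swap_apply_of_ne_of_ne hli hlj, hli, hlj]
  have h1 := hd (Pi.single i 1)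
  rw [heq] at h1
  exact h1.unique (hd _)

/-- The gradient at a decreasing vector is decreasing, under the criterion. -/
lemma fderiv_single_antitone {N : ℕ} {F : (Fin N → ℝ) → ℝ}
    (hsymm : ∀ (σ : Equiv.Perm (Fin N)) (x : Fin N → ℝ), F (x ∘ σ) = F x)
    {x : Fin N → ℝ} (hx : DifferentiableAt ℝ F x) (hanti : Antitone x)
    (hcrit : ∀ i j : Fin N, 0 ≤ (x i - x j) *
      (fderiv ℝ F x (Pi.single i 1) - fderiv ℝ F x (Pi.single j 1))) :
    Antitone fun i : Fin N => fderiv ℝ F x (Pi.single i 1) := by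
  intro i j hij
  rcases (hanti hij).eq_or_lt with h | h
  · exact (fderiv_single_eq_of_symm hsymm hx h).le
  · exact sub_nonneg.1 (nonneg_of_mul_nonneg_right (hcrit i j) (sub_pos.2 h))

lemma fderiv_eq_sum {N : ℕ} (L : (Fin N → ℝ) →L[ℝ] ℝ) (v : Fin N → ℝ) :
    L v = ∑ i, L (Pi.single i 1) * v i := by
  conv_lhs => rw [pi_eq_sum_univ' v, map_sum]
  refine Finset.sum_congr rfl fun i _ => ?_
  rw [map_smul, smul_eq_mul, mul_comm]

/-- Schur–Ostrowski criterion: a symmetric function `F` with continuous partial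
derivatives on `I^N` (`I` an open interval) is Schur-convex iff
`(x_i - x_j)(∂F/∂x_i - ∂F/∂x_j) ≥ 0` on `I^N` for all `i, j`. -/
theorem schur_ostrowski {N : ℕ} (hN : 1 ≤ N)
    (I : Set ℝ) (hIopen : IsOpen I) (hIconv : Convex ℝ I) (hIne : I.Nonempty)
    (F : (Fin N → ℝ) → ℝ)
    (hsymm : ∀ (σ : Equiv.Perm (Fin N)) (x : Fin N → ℝ), F (x ∘ σ) = F x)
    (hdiff : ContDiffOn ℝ 1 F (Set.univ.pi fun _ : Fin N => I)) :
    (∀ x ∈ Set.univ.pi fun _ : Fin N => I, ∀ y ∈ Set.univ.pi fun _ : Fin N => I,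
        Majorized x y → F x ≤ F y) ↔
    (∀ x ∈ Set.univ.pi fun _ : Fin N => I, ∀ i j : Fin N,
        0 ≤ (x i - x j) *
          (fderiv ℝ F x (Pi.single i 1) - fderiv ℝ F x (Pi.single j 1))) := by
  set B : Set (Fin N → ℝ) := Set.univ.pi fun _ : Fin N => I with hB
  have hBopen : IsOpen B := isOpen_set_pi Set.finite_univ fun _ _ => hIopen
  have hBconv : Convex ℝ B := convex_pi fun _ _ => hIconv
  have hF : ∀ x ∈ B, DifferentiableAt ℝ F x := fun x hx =>
    (hdiff.differentiableOn one_ne_zero).differentiableAt (hBopen.mem_nhds hx)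
  constructor
  · intro hschur
    have main : ∀ x ∈ B, ∀ i j : Fin N, x j < x i →
        fderiv ℝ F x (Pi.single j 1) ≤ fderiv ℝ F x (Pi.single i 1) := by
      intro x hx i j hlt
      set v : Fin N → ℝ := Pi.single j 1 - Pi.single i 1 with hv
      have hder : HasDerivAt (fun s : ℝ => F (x + s • v)) (fderiv ℝ F x v) 0 := by
        have := hasDerivAt_line (F := F) (x := x) (v := v) (t := 0) (by simpa using hF x hx)
        simpa using this
      have hcont : ContinuousAt (fun s : ℝ => x + s • v) 0 := by fun_prop
      have hmem : ∀ᶠ s in nhds (0 : ℝ), x + s • v ∈ B :=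
        hcont.eventually_mem (hBopen.mem_nhds (by simpa using hx))
      have hle : fderiv ℝ F x v ≤ 0 := by
        refine le_of_tendsto hder.tendsto_slope_zero_right ?_
        filter_upwards [hmem.filter_mono nhdsWithin_le_nhds,
          Ioo_mem_nhdsGT (sub_pos.2 hlt)] with s hs hs2
        have h := hschur _ hs x hx (majorized_transfer x hs2.1.le hs2.2.le)
        simp only [zero_add, zero_smul, add_zero, smul_eq_mul]
        exact mul_nonpos_of_nonneg_of_nonpos (inv_nonneg.2 hs2.1.le) (sub_nonpos.2 h)
      rw [hv, map_sub] at hle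
      linarith
    intro x hx i j
    rcases lt_trichotomy (x i) (x j) with h | h | h
    · exact mul_nonneg_of_nonpos_of_nonpos (sub_nonpos.2 h.le) (sub_nonpos.2 (main x hx j i h))
    · simp [h]
    · exact mul_nonneg (sub_nonneg.2 h.le) (sub_nonneg.2 (main x hx i j h))
  · intro hcrit x hx y hy hmaj
    obtain ⟨σ, hσ⟩ := sortedDesc_eq_comp x
    obtain ⟨τ, hτ⟩ := sortedDesc_eq_comp y
    rw [← hsymm σ x, ← hsymm τ y, ← hσ, ← hτ]
    set a := sortedDesc x with ha
    set b := sortedDesc y with hb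
    have haB : a ∈ B := fun i _ => by rw [hσ]; exact hx _ trivial
    have hbB : b ∈ B := fun i _ => by rw [hτ]; exact hy _ trivial
    have hsum : ∑ i, (b - a) i = 0 := by
      simp only [Pi.sub_apply, Finset.sum_sub_distrib, hσ, hτ, Function.comp,
        Equiv.sum_comp σ x, Equiv.sum_comp τ y, hmaj.2, sub_self]
    have hpart : ∀ k, 1 ≤ k → k ≤ N →
        0 ≤ ∑ i ∈ univ.filter (fun i : Fin N => (i : ℕ) < k), (b - a) i := by
      intro k h1 h2
      simp only [Pi.sub_apply, Finset.sum_sub_distrib]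
      exact sub_nonneg.2 (hmaj.1 k h1 h2)
    have hseg : ∀ t ∈ Set.Icc (0 : ℝ) 1, a + t • (b - a) ∈ B := fun t ht =>
      hBconv.add_smul_sub_mem haB hbB ht
    have hanti : ∀ t ∈ Set.Icc (0 : ℝ) 1, Antitone (a + t • (b - a)) := by
      intro t ht i j hij
      have h1 := mul_le_mul_of_nonneg_left (sortedDesc_antitone x hij) (sub_nonneg.2 ht.2)
      have h2 := mul_le_mul_of_nonneg_left (sortedDesc_antitone y hij) ht.1
      simp only [Pi.add_apply, Pi.smul_apply, Pi.sub_apply, smul_eq_mul]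
      linarith
    have hder : ∀ t ∈ Set.Icc (0 : ℝ) 1, HasDerivAt (fun s : ℝ => F (a + s • (b - a)))
        (fderiv ℝ F (a + t • (b - a)) (b - a)) t := fun t ht => hasDerivAt_line (hF _ (hseg t ht))
    have hmono : MonotoneOn (fun s : ℝ => F (a + s • (b - a))) (Set.Icc 0 1) := by
      refine monotoneOn_of_hasDerivWithinAt_nonneg (convex_Icc 0 1)
        (fun t ht => (hder t ht).continuousAt.continuousWithinAt)
        (fun t ht => (hder t (interior_subset ht)).hasDerivWithinAt) fun t ht => ?_
      have ht := interior_subset ht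
      rw [fderiv_eq_sum]
      exact sum_mul_nonneg_of_antitone _ _ (fderiv_single_antitone hsymm (hF _ (hseg t ht))
        (hanti t ht) (hcrit _ (hseg t ht))) hpart hsum
    have := hmono (Set.left_mem_Icc.2 zero_le_one) (Set.right_mem_Icc.2 zero_le_one) zero_le_one
    simpa using this
end

section
/- Let K be a type containing three distinct elements 1, 2, 3, and let d be the spider distance on K × ℝ: d((i,r),(j,s)) = |r − s| if i = j and |r| + |s| otherwise. Let a, b, c ≥ 0, set x₁ = (1,a), x₂ = (2,b), x₃ = (3,c), and let λ₁, λ₂, λ₃ > 0 with λ₁ + λ₂ + λ₃ = 1. If λ₃c ≥ λ₁a + λ₂b, then the point y = (3, λ₃c − λ₁a − λ₂b) satisfies λ₁ d(y,x₁)² + λ₂ d(y,x₂)² + λ₃ d(y,x₃)² ≤ λ₁ d(z,x₁)² + λ₂ d(z,x₂)² + λ₃ d(z,x₃)² for every point z = (j,t) with j ∈ K and t ≥ 0; i.e., y is the barycenter of the measure λ₁δ_{x₁} + λ₂δ_{x₂} + λ₃δ_{x₃}. -/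
/-!
Fold the spider onto the real line, sending leg `k₃` to the nonnegative half-line and every other
leg to the nonpositive one. The folding is 1-Lipschitz (`abs_spiderFold_sub_le`), so the
functional at any point `z` is at least the quadratic functional on the line at the image of `z`,
for the image points `-a`, `-b`, `c`. The latter is minimal at the mean `l₃ c - l₁ a - l₂ b`
(`weighted_sq_mean_le`). As the mean is nonnegative, it lifts to the point `y` on leg `k₃`, and
from a point of that leg the folding preserves the distance to each `xᵢ`.
-/

/-- The spider distance on `K × ℝ`:
`d((i,r),(j,s)) = |r - s|` if `i = j` and `|r| + |s|` otherwise. -/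
noncomputable def spiderDist {K : Type*} (p q : K × ℝ) : ℝ :=
  open scoped Classical in
  if p.1 = q.1 then |p.2 - q.2| else |p.2| + |q.2|

/-- The folding of the spider onto the line that sends the leg `k` to the nonnegative half-line
and all the other legs to the nonpositive one. Negative second coordinates, which do not represent
points of the spider, are allowed. -/
noncomputable def spiderFold {K : Type*} (k : K) (p : K × ℝ) : ℝ :=
  open scoped Classical in
  if p.1 = k then p.2 else -p.2

theorem abs_spiderFold_sub_le {K : Type*} (k : K) (p q : K × ℝ) :
    |spiderFold k p - spiderFold k q| ≤ spiderDist p q := by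
  unfold spiderFold spiderDist
  by_cases h : p.1 = q.1
  · rw [h, if_pos rfl]
    split_ifs
    · exact le_rfl
    · rw [neg_sub_neg, abs_sub_comm]
  · rw [if_neg h]
    split_ifs
    · exact abs_sub _ _
    · simpa using abs_sub p.2 (-q.2)
    · simpa using abs_sub (-p.2) q.2
    · simpa using abs_sub (-p.2) (-q.2)

/-- On the line, the weighted sum of squared distances to three points is minimal at their weighted
mean. Only the total weight matters: the individual weights may be negative. -/
theorem weighted_sq_mean_le (l₁ l₂ l₃ p₁ p₂ p₃ s : ℝ) (hsum : l₁ + l₂ + l₃ = 1) :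
    l₁ * (l₁ * p₁ + l₂ * p₂ + l₃ * p₃ - p₁) ^ 2 + l₂ * (l₁ * p₁ + l₂ * p₂ + l₃ * p₃ - p₂) ^ 2
        + l₃ * (l₁ * p₁ + l₂ * p₂ + l₃ * p₃ - p₃) ^ 2 ≤
      l₁ * (s - p₁) ^ 2 + l₂ * (s - p₂) ^ 2 + l₃ * (s - p₃) ^ 2 := by
  obtain rfl : l₃ = 1 - l₁ - l₂ := by linarith
  -- The difference of the two sides is the squared distance from `s` to the mean.
  nlinarith [sq_nonneg (s - (l₁ * p₁ + l₂ * p₂ + (1 - l₁ - l₂) * p₃))]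

/-- If `λ₃ c ≥ λ₁ a + λ₂ b`, the barycenter of `λ₁δ_{x₁} + λ₂δ_{x₂} + λ₃δ_{x₃}` on the
spider is `y = (3, λ₃ c - λ₁ a - λ₂ b)`: it minimizes `z ↦ ∑ᵢ λᵢ d(z, xᵢ)²`. -/
theorem spider_barycenter_third_leg {K : Type*} (k₁ k₂ k₃ : K)
    (h12 : k₁ ≠ k₂) (h13 : k₁ ≠ k₃) (h23 : k₂ ≠ k₃)
    (a b c : ℝ) (ha : 0 ≤ a) (hb : 0 ≤ b) (hc : 0 ≤ c)
    (l₁ l₂ l₃ : ℝ) (hl₁ : 0 < l₁) (hl₂ : 0 < l₂) (hl₃ : 0 < l₃)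
    (hsum : l₁ + l₂ + l₃ = 1)
    (hdom : l₁ * a + l₂ * b ≤ l₃ * c) :
    ∀ (j : K) (t : ℝ), 0 ≤ t →
      l₁ * spiderDist ((k₃, l₃ * c - l₁ * a - l₂ * b) : K × ℝ) (k₁, a) ^ 2
        + l₂ * spiderDist ((k₃, l₃ * c - l₁ * a - l₂ * b) : K × ℝ) (k₂, b) ^ 2
        + l₃ * spiderDist ((k₃, l₃ * c - l₁ * a - l₂ * b) : K × ℝ) (k₃, c) ^ 2 ≤
      l₁ * spiderDist ((j, t) : K × ℝ) (k₁, a) ^ 2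
        + l₂ * spiderDist ((j, t) : K × ℝ) (k₂, b) ^ 2
        + l₃ * spiderDist ((j, t) : K × ℝ) (k₃, c) ^ 2 := by
  intro j t _
  have hm : 0 ≤ l₃ * c - l₁ * a - l₂ * b := by linarith
  have lower : ∀ (i : K) (r : ℝ),
      (spiderFold k₃ (j, t) - spiderFold k₃ (i, r)) ^ 2 ≤ spiderDist (j, t) (i, r) ^ 2 :=
    fun i r => sq_le_sq.2 ((abs_spiderFold_sub_le k₃ (j, t) (i, r)).trans (le_abs_self _))
  have f₁ : spiderFold k₃ (k₁, a) = -a := if_neg h13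
  have f₂ : spiderFold k₃ (k₂, b) = -b := if_neg h23
  have f₃ : spiderFold k₃ (k₃, c) = c := if_pos rfl
  have d₁ := lower k₁ a
  have d₂ := lower k₂ b
  have d₃ := lower k₃ c
  rw [f₁] at d₁
  rw [f₂] at d₂
  rw [f₃] at d₃
  have line := weighted_sq_mean_le l₁ l₂ l₃ (-a) (-b) c (spiderFold k₃ (j, t)) hsum
  have hmean : l₁ * -a + l₂ * -b + l₃ * c = l₃ * c - l₁ * a - l₂ * b := by ring
  rw [hmean, sub_neg_eq_add, sub_neg_eq_add] at line
  have e₁ : spiderDist (k₃, l₃ * c - l₁ * a - l₂ * b) (k₁, a)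
      = l₃ * c - l₁ * a - l₂ * b + a := by
    simp only [spiderDist, if_neg h13.symm, abs_of_nonneg hm, abs_of_nonneg ha]
  have e₂ : spiderDist (k₃, l₃ * c - l₁ * a - l₂ * b) (k₂, b)
      = l₃ * c - l₁ * a - l₂ * b + b := by
    simp only [spiderDist, if_neg h23.symm, abs_of_nonneg hm, abs_of_nonneg hb]
  have e₃ : spiderDist (k₃, l₃ * c - l₁ * a - l₂ * b) (k₃, c)
      = |l₃ * c - l₁ * a - l₂ * b - c| := if_pos rfl
  rw [e₁, e₂, e₃, sq_abs]
  refine line.trans ?_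
  gcongr
end

section
/- Let K be a type containing three distinct elements 1, 2, 3, and let d be the spider distance on K × ℝ: d((i,r),(j,s)) = |r − s| if i = j and |r| + |s| otherwise. Let a, b, c ≥ 0, set x₁ = (1,a), x₂ = (2,b), x₃ = (3,c), and let λ₁, λ₂, λ₃ > 0 with λ₁ + λ₂ + λ₃ = 1. If λ₁a ≤ λ₂b + λ₃c, λ₂b ≤ λ₁a + λ₃c, and λ₃c ≤ λ₁a + λ₂b, then the origin o = (1,0) satisfies λ₁ d(o,x₁)² + λ₂ d(o,x₂)² + λ₃ d(o,x₃)² ≤ λ₁ d(z,x₁)² + λ₂ d(z,x₂)² + λ₃ d(z,x₃)² for every point z = (j,t) with j ∈ K and t ≥ 0; i.e., the origin is the barycenter of λ₁δ_{x₁} + λ₂δ_{x₂} + λ₃δ_{x₃}. -/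
/-- Law of cosines on the spider: the angle at the origin between two points is `0` on a common leg
and `π` otherwise. -/
theorem spiderDist_sq {K : Type*} [DecidableEq K] (j k : K) {t r : ℝ} (ht : 0 ≤ t) (hr : 0 ≤ r) :
    spiderDist ((j, t) : K × ℝ) (k, r) ^ 2 =
      t ^ 2 + r ^ 2 + 2 * t * (if j = k then -r else r) := by
  by_cases h : j = k
  · simp only [spiderDist, h, if_true, sq_abs]
    ring
  · simp only [spiderDist, h, if_false, abs_of_nonneg ht, abs_of_nonneg hr]
    ring

/-- If `λ₁ a ≤ λ₂ b + λ₃ c`, `λ₂ b ≤ λ₁ a + λ₃ c` and `λ₃ c ≤ λ₁ a + λ₂ b`, the origin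
`o = (1, 0)` is the barycenter of `λ₁δ_{x₁} + λ₂δ_{x₂} + λ₃δ_{x₃}` on the spider:
it minimizes `z ↦ ∑ᵢ λᵢ d(z, xᵢ)²`. -/
theorem spider_barycenter_origin {K : Type*} (k₁ k₂ k₃ : K)
    (h12 : k₁ ≠ k₂) (h13 : k₁ ≠ k₃) (h23 : k₂ ≠ k₃)
    (a b c : ℝ) (ha : 0 ≤ a) (hb : 0 ≤ b) (hc : 0 ≤ c)
    (l₁ l₂ l₃ : ℝ) (hl₁ : 0 < l₁) (hl₂ : 0 < l₂) (hl₃ : 0 < l₃)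
    (hsum : l₁ + l₂ + l₃ = 1)
    (hA : l₁ * a ≤ l₂ * b + l₃ * c)
    (hB : l₂ * b ≤ l₁ * a + l₃ * c)
    (hC : l₃ * c ≤ l₁ * a + l₂ * b) :
    ∀ (j : K) (t : ℝ), 0 ≤ t →
      l₁ * spiderDist ((k₁, 0) : K × ℝ) (k₁, a) ^ 2
        + l₂ * spiderDist ((k₁, 0) : K × ℝ) (k₂, b) ^ 2
        + l₃ * spiderDist ((k₁, 0) : K × ℝ) (k₃, c) ^ 2 ≤
      l₁ * spiderDist ((j, t) : K × ℝ) (k₁, a) ^ 2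
        + l₂ * spiderDist ((j, t) : K × ℝ) (k₂, b) ^ 2
        + l₃ * spiderDist ((j, t) : K × ℝ) (k₃, c) ^ 2 := by
  classical
  intro j t ht
  simp only [spiderDist_sq _ _ le_rfl ha, spiderDist_sq _ _ le_rfl hb,
    spiderDist_sq _ _ le_rfl hc, spiderDist_sq _ _ ht ha, spiderDist_sq _ _ ht hb,
    spiderDist_sq _ _ ht hc]
  have slope : 0 ≤ l₁ * (if j = k₁ then -a else a) + l₂ * (if j = k₂ then -b else b)
      + l₃ * (if j = k₃ then -c else c) := by
    have hla := mul_nonneg hl₁.le ha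
    have hlb := mul_nonneg hl₂.le hb
    have hlc := mul_nonneg hl₃.le hc
    by_cases h₁ : j = k₁
    · subst h₁
      simp only [h12, h13, if_true, if_false]
      linarith
    · by_cases h₂ : j = k₂
      · subst h₂
        simp only [h₁, h23, if_true, if_false]
        linarith
      · by_cases h₃ : j = k₃
        · simp only [h₃, h13.symm, h23.symm, if_true, if_false]
          linarith
        · simp only [h₁, h₂, h₃, if_false]
          linarith
  have hquad : (l₁ + l₂ + l₃) * t ^ 2 = t ^ 2 := by rw [hsum, one_mul]
  linarith [mul_nonneg ht slope, sq_nonneg t]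
end

section
/- Let f₁, f₂, f₃ : ℝ → ℝ be convex on [0,∞) with f₁(0) = f₂(0) = f₃(0) = 0, and suppose that f₁ + f₂ and f₁ + f₃ are nondecreasing on [0,∞). Let λ₁, λ₂, λ₃ > 0 with λ₁ + λ₂ + λ₃ = 1 and let a, b, c ≥ 0 satisfy λ₁a ≥ λ₂b + λ₃c. Then f₁(λ₁a − λ₂b − λ₃c) ≤ λ₁ f₁(a) + λ₂ f₂(b) + λ₃ f₃(c). -/
/-! Put `d = l₁ a - l₂ b - l₃ c`, so `0 ≤ d ≤ a`, and let `s` be the slope of the chord of `f₁` over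
`[d, a]`. Monotonicity of `f₁ + f₂` and `f₁ + f₃` forces `f₂ x ≥ -s x` and `f₃ x ≥ -s x` for all
`x ≥ 0` (`neg_slope_mul_le`), while `f₁ a = f₁ d + s (a - d)` by the choice of `s`. Substituting,
the right-hand side of the claim minus `f₁ d` is at least `(l₂ + l₃) (s d - f₁ d)`, which is
nonnegative because the chord slopes of `f₁` over `[0, d]` and `[d, a]` increase.
-/

/-- The three-point form of convexity, cleared of denominators so that the points may coincide. -/
lemma convexOn_three_point {f : ℝ → ℝ} (hf : ConvexOn ℝ (Set.Ici 0) f) {x y z : ℝ}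
    (hx : 0 ≤ x) (hxy : x ≤ y) (hyz : y ≤ z) :
    (z - x) * f y ≤ (z - y) * f x + (y - x) * f z := by
  rcases (hxy.trans hyz).eq_or_lt with h | h
  · obtain rfl : x = y := le_antisymm hxy (h ▸ hyz)
    subst h
    simp
  · have hp : 0 < z - x := sub_pos.2 h
    have key := hf.2 (Set.mem_Ici.2 hx) (Set.mem_Ici.2 (hx.trans h.le))
      (div_nonneg (sub_nonneg.2 hyz) hp.le) (div_nonneg (sub_nonneg.2 hxy) hp.le)
      (by field_simp; ring)
    have e : ((z - y) / (z - x)) • x + ((y - x) / (z - x)) • z = y := by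
      simp only [smul_eq_mul]; field_simp; ring
    rw [e] at key
    have e' : ((z - y) / (z - x)) • f x + ((y - x) / (z - x)) • f z
        = ((z - y) * f x + (y - x) * f z) / (z - x) := by
      simp only [smul_eq_mul]; field_simp
    rw [e', le_div_iff₀ hp] at key
    linarith

lemma le_slope_mul {f : ℝ → ℝ} (hf : ConvexOn ℝ (Set.Ici 0) f) (hf0 : f 0 = 0) {d a s : ℝ}
    (hd : 0 ≤ d) (hda : d < a) (hs : f a = f d + s * (a - d)) : f d ≤ s * d := by
  have h := convexOn_three_point hf le_rfl hd hda.le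
  rw [hf0, hs] at h
  refine le_of_mul_le_mul_left ?_ (sub_pos.2 hda)
  linarith

/-- If `f`, `g` are convex on `[0, ∞)` and vanish at `0`, and `f + g` is nondecreasing there, then
`g` lies above the line through `0` of slope `-s`, for `s` the slope of a chord of `f`. Up to the right end of the chord this holds because `g ≥ -f`
and `f` lies below the line of slope `s`; beyond it, because the slope of `g` over `[d, a]` is
at least `-s` and the chord slopes of `g` from `d` increase. -/
lemma neg_slope_mul_le {f g : ℝ → ℝ} (hf : ConvexOn ℝ (Set.Ici 0) f)
    (hg : ConvexOn ℝ (Set.Ici 0) g) (hf0 : f 0 = 0) (hg0 : g 0 = 0)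
    (hfg : MonotoneOn (f + g) (Set.Ici 0)) {d a s : ℝ} (hd : 0 ≤ d) (hda : d < a)
    (hs : f a = f d + s * (a - d)) {b : ℝ} (hb : 0 ≤ b) : -(s * b) ≤ g b := by
  have hfd := le_slope_mul hf hf0 hd hda hs
  have hpos : ∀ x, 0 ≤ x → 0 ≤ f x + g x := fun x hx => by
    simpa [hf0, hg0] using hfg (Set.mem_Ici.2 le_rfl) (Set.mem_Ici.2 hx) hx
  have hp := sub_pos.2 hda
  rcases le_total b d with hbd | hdb
  · rcases hd.eq_or_lt with rfl | hd'
    · obtain rfl : b = 0 := le_antisymm hbd hb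
      simp [hg0]
    · have h := convexOn_three_point hf le_rfl hb hbd
      rw [hf0] at h
      have : f b ≤ s * b := by
        refine le_of_mul_le_mul_left ?_ hd'
        linarith [mul_le_mul_of_nonneg_left hfd hb]
      linarith [hpos b hb]
  rcases le_total b a with hba | hab
  · have h := convexOn_three_point hf hd hdb hba
    rw [hs] at h
    have : f b ≤ f d + s * (b - d) := by
      refine le_of_mul_le_mul_left ?_ hp
      linarith
    linarith [hpos b hb]
  · have h := convexOn_three_point hg hd hda.le hab
    have hm : f d + g d ≤ f a + g a :=
      hfg (Set.mem_Ici.2 hd) (Set.mem_Ici.2 (hd.trans hda.le)) hda.le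
    have hga : g d - s * (a - d) ≤ g a := by linarith
    have : g d - s * (b - d) ≤ g b := by
      refine le_of_mul_le_mul_left ?_ hp
      linarith [mul_le_mul_of_nonneg_left hga (sub_nonneg.2 hdb)]
    linarith [hpos d hd]


/-- If `f₁, f₂, f₃` are convex on `[0,∞)` and vanish at `0`, with `f₁ + f₂` and
`f₁ + f₃` nondecreasing on `[0,∞)`, and `λ₁ a ≥ λ₂ b + λ₃ c`, then
`f₁(λ₁ a - λ₂ b - λ₃ c) ≤ λ₁ f₁(a) + λ₂ f₂(b) + λ₃ f₃(c)`. -/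
theorem tripod_convexity_first_leg (f₁ f₂ f₃ : ℝ → ℝ)
    (h₁ : ConvexOn ℝ (Set.Ici 0) f₁) (h₂ : ConvexOn ℝ (Set.Ici 0) f₂)
    (h₃ : ConvexOn ℝ (Set.Ici 0) f₃)
    (h₁0 : f₁ 0 = 0) (h₂0 : f₂ 0 = 0) (h₃0 : f₃ 0 = 0)
    (h12 : MonotoneOn (f₁ + f₂) (Set.Ici 0))
    (h13 : MonotoneOn (f₁ + f₃) (Set.Ici 0))
    (l₁ l₂ l₃ : ℝ) (hl₁ : 0 < l₁) (hl₂ : 0 < l₂) (hl₃ : 0 < l₃)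
    (hsum : l₁ + l₂ + l₃ = 1)
    (a b c : ℝ) (ha : 0 ≤ a) (hb : 0 ≤ b) (hc : 0 ≤ c)
    (hdom : l₂ * b + l₃ * c ≤ l₁ * a) :
    f₁ (l₁ * a - l₂ * b - l₃ * c) ≤ l₁ * f₁ a + l₂ * f₂ b + l₃ * f₃ c := by
  obtain ⟨d, hd⟩ : ∃ d, d = l₁ * a - l₂ * b - l₃ * c := ⟨_, rfl⟩
  rw [← hd]
  have hd0 : 0 ≤ d := by linarith
  have hlb := mul_nonneg hl₂.le hb
  have hlc := mul_nonneg hl₃.le hc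
  rcases ha.eq_or_lt with rfl | ha'
  · have hb0 : b = 0 := (mul_eq_zero.1 (by linarith : l₂ * b = 0)).resolve_left hl₂.ne'
    have hc0 : c = 0 := (mul_eq_zero.1 (by linarith : l₃ * c = 0)).resolve_left hl₃.ne'
    subst hb0 hc0
    simp [hd, h₁0, h₂0, h₃0]
  · have hda : d < a := by
      have : l₁ * a < 1 * a := mul_lt_mul_of_pos_right (by linarith) ha'
      linarith
    obtain ⟨s, hs⟩ : ∃ s, f₁ a = f₁ d + s * (a - d) :=
      ⟨(f₁ a - f₁ d) / (a - d), by rw [div_mul_cancel₀ _ (sub_pos.2 hda).ne']; ring⟩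
    have hfd := mul_le_mul_of_nonneg_left (le_slope_mul h₁ h₁0 hd0 hda hs) (add_pos hl₂ hl₃).le
    have k₂ := mul_le_mul_of_nonneg_left
      (neg_slope_mul_le h₁ h₂ h₁0 h₂0 h12 hd0 hda hs hb) hl₂.le
    have k₃ := mul_le_mul_of_nonneg_left
      (neg_slope_mul_le h₁ h₃ h₁0 h₃0 h13 hd0 hda hs hc) hl₃.le
    have e : s * d = s * (l₁ * a - l₂ * b - l₃ * c) := by rw [← hd]
    obtain rfl : l₁ = 1 - l₂ - l₃ := by linarith
    rw [hs]
    linarith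
end

section
/- Let f₁, f₂, f₃ : ℝ → ℝ be convex on [0,∞) with f₁(0) = f₂(0) = f₃(0) = 0, and suppose that f₁ + f₂, f₁ + f₃, and f₂ + f₃ are all nondecreasing on [0,∞). Let λ₁, λ₂, λ₃ > 0 with λ₁ + λ₂ + λ₃ = 1 and let a, b, c ≥ 0 satisfy λ₁a ≤ λ₂b + λ₃c, λ₂b ≤ λ₁a + λ₃c, and λ₃c ≤ λ₁a + λ₂b. Then 0 ≤ λ₁ f₁(a) + λ₂ f₂(b) + λ₃ f₃(c). -/
/-!
A convex `f` on `[0,∞)` with `f 0 = 0` has nondecreasing chord slopes `f t / t`. Hence for a single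
small `t > 0` the numbers `sᵢ = fᵢ t / t` satisfy `s₁ a ≤ f₁ a`, `s₂ b ≤ f₂ b`, `s₃ c ≤ f₃ c`,
while monotonicity of the pairwise sums gives `sᵢ + sⱼ ≥ 0`. With `A = l₁ a`, `B = l₂ b`,
`C = l₃ c` the result reduces to the linear case `s₁ A + s₂ B + s₃ C ≥ 0`, which holds because
twice the left side is
`(s₁ + s₂)(A + B - C) + (s₁ + s₃)(A + C - B) + (s₂ + s₃)(B + C - A)`.
-/

/-- The chord slope of `f` from `0` to any small `t` is at most the slope from `0` to `x`, with
denominators cleared so that `x = 0` is covered as well. -/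
lemma exists_chord_le {f : ℝ → ℝ} (hf : ConvexOn ℝ (Set.Ici 0) f) (h0 : f 0 = 0)
    {x : ℝ} (hx : 0 ≤ x) :
    ∃ t₀ > 0, ∀ t, 0 < t → t ≤ t₀ → f t * x ≤ f x * t := by
  rcases hx.eq_or_lt with rfl | hx
  · exact ⟨1, one_pos, fun t _ _ => by simp [h0]⟩
  · refine ⟨x, hx, fun t ht htx => ?_⟩
    -- `t` is the convex combination `(1 - t / x) • 0 + (t / x) • x`.
    have h := hf.2 (Set.mem_Ici.2 le_rfl) (Set.mem_Ici.2 hx.le)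
      (sub_nonneg.2 ((div_le_one hx).2 htx)) (div_nonneg ht.le hx.le) (sub_add_cancel 1 (t / x))
    simp only [smul_eq_mul, mul_zero, zero_add, h0, div_mul_cancel₀ t hx.ne'] at h
    calc f t * x ≤ t / x * f x * x := mul_le_mul_of_nonneg_right h hx.le
      _ = f x * t := by field_simp

/-- If `f₁, f₂, f₃` are convex on `[0,∞)` and vanish at `0`, with all pairwise sums
nondecreasing on `[0,∞)`, and `(λ₁ a, λ₂ b, λ₃ c)` satisfy the triangle conditions,
then `0 ≤ λ₁ f₁(a) + λ₂ f₂(b) + λ₃ f₃(c)`. -/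
theorem tripod_convexity_origin (f₁ f₂ f₃ : ℝ → ℝ)
    (h₁ : ConvexOn ℝ (Set.Ici 0) f₁) (h₂ : ConvexOn ℝ (Set.Ici 0) f₂)
    (h₃ : ConvexOn ℝ (Set.Ici 0) f₃)
    (h₁0 : f₁ 0 = 0) (h₂0 : f₂ 0 = 0) (h₃0 : f₃ 0 = 0)
    (h12 : MonotoneOn (f₁ + f₂) (Set.Ici 0))
    (h13 : MonotoneOn (f₁ + f₃) (Set.Ici 0))
    (h23 : MonotoneOn (f₂ + f₃) (Set.Ici 0))
    (l₁ l₂ l₃ : ℝ) (hl₁ : 0 < l₁) (hl₂ : 0 < l₂) (hl₃ : 0 < l₃)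
    (hsum : l₁ + l₂ + l₃ = 1)
    (a b c : ℝ) (ha : 0 ≤ a) (hb : 0 ≤ b) (hc : 0 ≤ c)
    (hA : l₁ * a ≤ l₂ * b + l₃ * c)
    (hB : l₂ * b ≤ l₁ * a + l₃ * c)
    (hC : l₃ * c ≤ l₁ * a + l₂ * b) :
    0 ≤ l₁ * f₁ a + l₂ * f₂ b + l₃ * f₃ c := by
  obtain ⟨t₁, ht₁, H₁⟩ := exists_chord_le h₁ h₁0 ha
  obtain ⟨t₂, ht₂, H₂⟩ := exists_chord_le h₂ h₂0 hb
  obtain ⟨t₃, ht₃, H₃⟩ := exists_chord_le h₃ h₃0 hc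
  obtain ⟨t, ht, hle⟩ : ∃ t, 0 < t ∧ t ≤ t₁ ∧ t ≤ t₂ ∧ t ≤ t₃ :=
    ⟨min t₁ (min t₂ t₃), by positivity, by simp⟩
  have k₁ := mul_le_mul_of_nonneg_left (H₁ t ht hle.1) hl₁.le
  have k₂ := mul_le_mul_of_nonneg_left (H₂ t ht hle.2.1) hl₂.le
  have k₃ := mul_le_mul_of_nonneg_left (H₃ t ht hle.2.2) hl₃.le
  have m12 := h12 (Set.mem_Ici.2 le_rfl) (Set.mem_Ici.2 ht.le) ht.le
  have m13 := h13 (Set.mem_Ici.2 le_rfl) (Set.mem_Ici.2 ht.le) ht.le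
  have m23 := h23 (Set.mem_Ici.2 le_rfl) (Set.mem_Ici.2 ht.le) ht.le
  simp only [Pi.add_apply, h₁0, h₂0, h₃0, add_zero] at m12 m13 m23
  have p12 := mul_nonneg m12 (sub_nonneg.2 hC)
  have p13 := mul_nonneg m13 (sub_nonneg.2 hB)
  have p23 := mul_nonneg m23 (sub_nonneg.2 hA)
  refine nonneg_of_mul_nonneg_left (b := t) ?_ ht
  linarith
end

section
/- (Gluing of convex functions at the origin; geodesic convexity across the vertex of a spider.) Let f₁, f₂ : ℝ → ℝ be convex on [0,∞) with f₁(0) = f₂(0), and suppose that f₁ + f₂ is nondecreasing on [0,∞). Define g : ℝ → ℝ by g(t) = f₁(−t) for t ≤ 0 and g(t) = f₂(t) for t ≥ 0. Then g is convex on ℝ. -/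
/-!
Only secants that straddle the origin need an argument. Write `c` for the common value at `0`.
For `a, b > 0` put `m = min a b`: monotonicity of `f₁ + f₂` gives `f₁ m - c ≥ -(f₂ m - c)`, and the
slopes of `f₁` and `f₂` from `0` are nondecreasing, so `(f₁ a - c) / a + (f₂ b - c) / b ≥ 0`. This is
convexity of `g` at the triple `-a < 0 < b` (`glue_at_zero`). A triple `x < 0 < y < z` follows by
combining the triples `x < 0 < y` and `0 < y < z` (`glue_across`), and a triple `x < y < 0 < z` is the
same statement after reflecting and exchanging `f₁` with `f₂`.
-/

/-- Slopes of adjacent secants of a convex function, with denominators cleared. -/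
theorem three_point {f : ℝ → ℝ} (h : ConvexOn ℝ (Set.Ici 0) f) {x y z : ℝ}
    (hx : 0 ≤ x) (hxy : x < y) (hyz : y < z) :
    (z - x) * f y ≤ (z - y) * f x + (y - x) * f z := by
  have hs := h.slope_mono_adjacent (Set.mem_Ici.2 hx)
    (Set.mem_Ici.2 (by linarith : (0 : ℝ) ≤ z)) hxy hyz
  rw [div_le_div_iff₀ (by linarith) (by linarith)] at hs
  linarith

/-- The case `a ≤ b` of `glue_at_zero`, where `min a b = a`. -/
theorem glue_at_zero_of_le {f₁ f₂ : ℝ → ℝ} (h₂ : ConvexOn ℝ (Set.Ici 0) f₂)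
    (h0 : f₁ 0 = f₂ 0) (h12 : MonotoneOn (f₁ + f₂) (Set.Ici 0)) {a b : ℝ}
    (ha : 0 < a) (hab : a ≤ b) :
    (a + b) * f₂ 0 ≤ b * f₁ a + a * f₂ b := by
  have hm : f₁ 0 + f₂ 0 ≤ f₁ a + f₂ a :=
    h12 (Set.mem_Ici.2 le_rfl) (Set.mem_Ici.2 ha.le) ha.le
  have hs : b * f₂ a ≤ (b - a) * f₂ 0 + a * f₂ b := by
    rcases hab.eq_or_lt with rfl | hlt
    · simp
    · simpa using three_point h₂ le_rfl ha hlt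
  rw [h0] at hm
  have := mul_le_mul_of_nonneg_left hm (ha.le.trans hab)
  linarith

/-- Convexity of the glued function at the triple `-a < 0 < b`. -/
theorem glue_at_zero {f₁ f₂ : ℝ → ℝ} (h₁ : ConvexOn ℝ (Set.Ici 0) f₁)
    (h₂ : ConvexOn ℝ (Set.Ici 0) f₂) (h0 : f₁ 0 = f₂ 0)
    (h12 : MonotoneOn (f₁ + f₂) (Set.Ici 0)) {a b : ℝ} (ha : 0 < a) (hb : 0 < b) :
    (a + b) * f₂ 0 ≤ b * f₁ a + a * f₂ b := by
  rcases le_total a b with hab | hab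
  · exact glue_at_zero_of_le h₂ h0 h12 ha hab
  · have := glue_at_zero_of_le h₁ h0.symm (add_comm f₁ f₂ ▸ h12) hb hab
    rw [h0] at this
    linarith

/-- Convexity of the glued function at the triple `-a < y < z` with `0 < y`. -/
theorem glue_across {f₁ f₂ : ℝ → ℝ} (h₁ : ConvexOn ℝ (Set.Ici 0) f₁)
    (h₂ : ConvexOn ℝ (Set.Ici 0) f₂) (h0 : f₁ 0 = f₂ 0)
    (h12 : MonotoneOn (f₁ + f₂) (Set.Ici 0)) {a y z : ℝ} (ha : 0 < a) (hy : 0 < y)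
    (hyz : y < z) :
    (z + a) * f₂ y ≤ (z - y) * f₁ a + (y + a) * f₂ z := by
  have hA := mul_le_mul_of_nonneg_left (glue_at_zero h₁ h₂ h0 h12 ha hy) (sub_pos.2 hyz).le
  have hB := mul_le_mul_of_nonneg_left (three_point h₂ le_rfl hy hyz) (add_pos hy ha).le
  -- In the sum of these two inequalities `f₂ 0` cancels and a common factor `y` is left.
  refine le_of_mul_le_mul_left ?_ hy
  linarith

/-- Gluing of convex functions at the origin: if `f₁, f₂` are convex on `[0,∞)` with
`f₁(0) = f₂(0)` and `f₁ + f₂` nondecreasing on `[0,∞)`, then the function `g` given by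
`g(t) = f₁(-t)` for `t ≤ 0` and `g(t) = f₂(t)` for `t ≥ 0` is convex on `ℝ`. -/
theorem glued_convex (f₁ f₂ : ℝ → ℝ)
    (h₁ : ConvexOn ℝ (Set.Ici 0) f₁) (h₂ : ConvexOn ℝ (Set.Ici 0) f₂)
    (h0 : f₁ 0 = f₂ 0)
    (h12 : MonotoneOn (f₁ + f₂) (Set.Ici 0))
    (g : ℝ → ℝ)
    (hg₁ : ∀ t : ℝ, t ≤ 0 → g t = f₁ (-t))
    (hg₂ : ∀ t : ℝ, 0 ≤ t → g t = f₂ t) :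
    ConvexOn ℝ Set.univ g := by
  suffices H : ∀ x y z : ℝ, x < y → y < z →
      (z - x) * g y ≤ (z - y) * g x + (y - x) * g z by
    refine convexOn_of_slope_mono_adjacent convex_univ fun {x y z} _ _ hxy hyz => ?_
    rw [div_le_div_iff₀ (by linarith) (by linarith)]
    linarith [H x y z hxy hyz]
  intro x y z hxy hyz
  rcases le_or_gt 0 x with hx | hx
  · rw [hg₂ x hx, hg₂ y (by linarith), hg₂ z (by linarith)]
    exact three_point h₂ hx hxy hyz
  rcases le_or_gt z 0 with hz | hz
  · rw [hg₁ x hx.le, hg₁ y (by linarith), hg₁ z hz]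
    linarith [three_point h₁ (neg_nonneg.2 hz) (neg_lt_neg hyz) (neg_lt_neg hxy)]
  rw [hg₁ x hx.le, hg₂ z hz.le]
  rcases lt_trichotomy y 0 with hy | rfl | hy
  · rw [hg₁ y hy.le]
    linarith [glue_across h₂ h₁ h0.symm (add_comm f₁ f₂ ▸ h12) hz (neg_pos.2 hy)
      (neg_lt_neg hxy)]
  · rw [hg₂ 0 le_rfl]
    linarith [glue_at_zero h₁ h₂ h0 h12 (neg_pos.2 hx) hz]
  · rw [hg₂ y hy.le]
    linarith [glue_across h₁ h₂ h0 h12 (neg_pos.2 hx) hy hyz]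
end

section
/- (Convexity on the tripod.) Let K = {1,2,3} and let d be the spider distance on K × ℝ: d((i,r),(j,s)) = |r − s| if i = j and |r| + |s| otherwise. Let f₁, f₂, f₃ : ℝ → ℝ be convex on [0,∞) with f₁(0) = f₂(0) = f₃(0), and suppose f₁ + f₂, f₁ + f₃, f₂ + f₃ are nondecreasing on [0,∞); define f on the tripod by f(i,r) = f_i(r). Let a, b, c ≥ 0, x₁ = (1,a), x₂ = (2,b), x₃ = (3,c), and λ₁, λ₂, λ₃ > 0 with λ₁ + λ₂ + λ₃ = 1. Then for every point y = (j,s) with s ≥ 0 that minimizes z ↦ λ₁ d(z,x₁)² + λ₂ d(z,x₂)² + λ₃ d(z,x₃)² over all points z = (ℓ,t) with t ≥ 0, one has f(y) ≤ λ₁ f₁(a) + λ₂ f₂(b) + λ₃ f₃(c). -/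
/-- The right derivative at `0` of a convex function on `[0,∞)`, encoded as the infimum of its secant
slopes from `0`. The value is the junk value `0` when the slopes are unbounded below. -/
noncomputable def slopeZero (g : ℝ → ℝ) : ℝ :=
  sInf ((fun r => (g r - g 0) / r) '' Set.Ioi 0)

/-- Convexity at `s ∈ [0, s + q]`, with denominators cleared. -/
lemma mul_le_of_convexOn {g : ℝ → ℝ} (hg : ConvexOn ℝ (Set.Ici 0) g) {s q : ℝ}
    (hs : 0 < s) (hq : 0 ≤ q) : (s + q) * g s ≤ s * g (s + q) + q * g 0 := by
  have hsq : 0 < s + q := by linarith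
  have h := hg.2 (Set.mem_Ici.2 hsq.le) (Set.self_mem_Ici (a := (0 : ℝ)))
    (show 0 ≤ s / (s + q) by positivity) (show 0 ≤ q / (s + q) by positivity) (by field_simp)
  simp only [smul_eq_mul, mul_zero, add_zero] at h
  rw [div_mul_cancel₀ _ hsq.ne'] at h
  have h2 := mul_le_mul_of_nonneg_left h hsq.le
  have e : (s + q) * (s / (s + q) * g (s + q) + q / (s + q) * g 0)
      = s * g (s + q) + q * g 0 := by field_simp
  linarith

lemma secant_mono_zero {g : ℝ → ℝ} (hg : ConvexOn ℝ (Set.Ici 0) g) {r t : ℝ}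
    (hr : 0 < r) (hrt : r ≤ t) : (g r - g 0) / r ≤ (g t - g 0) / t := by
  have h := mul_le_of_convexOn hg hr (sub_nonneg.2 hrt)
  rw [add_sub_cancel] at h
  rw [div_le_div_iff₀ hr (hr.trans_le hrt)]
  linarith

/-- Secant slopes from `0` of two different legs, taken at possibly different radii, have a
nonnegative sum: by monotonicity both may be compared at the smaller radius. -/
lemma secant_add_nonneg {g h : ℝ → ℝ} (hg : ConvexOn ℝ (Set.Ici 0) g)
    (hh : ConvexOn ℝ (Set.Ici 0) h) (hgh : MonotoneOn (g + h) (Set.Ici 0)) {r t : ℝ}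
    (hr : 0 < r) (ht : 0 < t) : 0 ≤ (g r - g 0) / r + (h t - h 0) / t := by
  have hm : 0 < min r t := lt_min hr ht
  have h1 := secant_mono_zero hg hm (min_le_left r t)
  have h2 := secant_mono_zero hh hm (min_le_right r t)
  have h3 := hgh (a := 0) (b := min r t) (by simp) hm.le hm.le
  simp only [Pi.add_apply] at h3
  have h4 : 0 ≤ ((g (min r t) - g 0) + (h (min r t) - h 0)) / min r t :=
    div_nonneg (by linarith) hm.le
  rw [add_div] at h4
  linarith

/-- Monotonicity of `g + h` for some convex `h` makes the slopes of `g` at `0` bounded below, so that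
`slopeZero g` is a genuine infimum. -/
lemma bddBelow_secants {g h : ℝ → ℝ} (hg : ConvexOn ℝ (Set.Ici 0) g)
    (hh : ConvexOn ℝ (Set.Ici 0) h) (hgh : MonotoneOn (g + h) (Set.Ici 0)) :
    BddBelow ((fun r => (g r - g 0) / r) '' Set.Ioi 0) := by
  refine ⟨-((h 1 - h 0) / 1), ?_⟩
  rintro _ ⟨r, hr, rfl⟩
  have := secant_add_nonneg hg hh hgh hr one_pos
  dsimp only
  linarith

lemma slopeZero_add_nonneg {g h : ℝ → ℝ} (hg : ConvexOn ℝ (Set.Ici 0) g)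
    (hh : ConvexOn ℝ (Set.Ici 0) h) (hgh : MonotoneOn (g + h) (Set.Ici 0)) :
    0 ≤ slopeZero g + slopeZero h := by
  have hne : ∀ k : ℝ → ℝ, ((fun r => (k r - k 0) / r) '' Set.Ioi 0).Nonempty :=
    fun k => ⟨_, 1, Set.mem_Ioi.2 one_pos, rfl⟩
  suffices -slopeZero h ≤ slopeZero g by linarith
  refine le_csInf (hne g) ?_
  rintro _ ⟨r, hr, rfl⟩
  suffices -((g r - g 0) / r) ≤ slopeZero h by dsimp only; linarith
  refine le_csInf (hne h) ?_
  rintro _ ⟨t, ht, rfl⟩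
  have := secant_add_nonneg hg hh hgh hr ht
  dsimp only
  linarith

lemma slopeZero_mul_le {g h : ℝ → ℝ} (hg : ConvexOn ℝ (Set.Ici 0) g)
    (hh : ConvexOn ℝ (Set.Ici 0) h) (hgh : MonotoneOn (g + h) (Set.Ici 0)) {r : ℝ} (hr : 0 ≤ r) :
    g 0 + slopeZero g * r ≤ g r := by
  rcases hr.eq_or_lt with rfl | hr
  · simp
  · have : slopeZero g ≤ (g r - g 0) / r := csInf_le (bddBelow_secants hg hh hgh) ⟨r, hr, rfl⟩
    rw [le_div_iff₀ hr] at this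
    linarith

/-- The slope of `g` on any interval `[s, s + q]` is at least its right derivative at `0`. -/
lemma add_slopeZero_mul_le {g h : ℝ → ℝ} (hg : ConvexOn ℝ (Set.Ici 0) g)
    (hh : ConvexOn ℝ (Set.Ici 0) h) (hgh : MonotoneOn (g + h) (Set.Ici 0)) {s q : ℝ}
    (hs : 0 < s) (hq : 0 ≤ q) : g s + slopeZero g * q ≤ g (s + q) := by
  have h1 := slopeZero_mul_le hg hh hgh hs.le
  have h2 := mul_le_of_convexOn hg hs hq
  have h3 := mul_le_mul_of_nonneg_left h1 hq
  refine le_of_mul_le_mul_left ?_ hs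
  linarith

/-- Completing the square: on the leg carrying the point `a`, the barycenter functional is
`(t - m)² + const` with `m = l₁ a - l₂ b - l₃ c`. -/
lemma eq_max_of_minimal {a b c l₁ l₂ l₃ s : ℝ} (hsum : l₁ + l₂ + l₃ = 1) (hs : 0 ≤ s)
    (hmin : ∀ t : ℝ, 0 ≤ t → l₁ * (s - a) ^ 2 + l₂ * (s + b) ^ 2 + l₃ * (s + c) ^ 2 ≤
      l₁ * (t - a) ^ 2 + l₂ * (t + b) ^ 2 + l₃ * (t + c) ^ 2) :
    s = max 0 (l₁ * a - l₂ * b - l₃ * c) := by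
  set m := l₁ * a - l₂ * b - l₃ * c with hm
  have key : ∀ t : ℝ, l₁ * (t - a) ^ 2 + l₂ * (t + b) ^ 2 + l₃ * (t + c) ^ 2 =
      (t - m) ^ 2 + (l₁ * a ^ 2 + l₂ * b ^ 2 + l₃ * c ^ 2 - m ^ 2) := by
    intro t
    rw [hm]
    linear_combination t ^ 2 * hsum
  have h := hmin (max 0 m) (le_max_left _ _)
  rw [key, key] at h
  rcases le_total 0 m with h0 | h0
  · rw [max_eq_right h0] at h ⊢
    nlinarith [sq_nonneg (s - m)]
  · rw [max_eq_left h0] at h ⊢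
    nlinarith [mul_nonneg hs (neg_nonneg.2 h0)]

/-- Jensen's inequality when the barycenter lies in the interior of the leg of `g₁`. -/
lemma jensen_leg {g₁ g₂ g₃ : ℝ → ℝ} (h₁ : ConvexOn ℝ (Set.Ici 0) g₁)
    (h₂ : ConvexOn ℝ (Set.Ici 0) g₂) (h₃ : ConvexOn ℝ (Set.Ici 0) g₃)
    (h012 : g₁ 0 = g₂ 0) (h013 : g₁ 0 = g₃ 0)
    (h12 : MonotoneOn (g₁ + g₂) (Set.Ici 0)) (h13 : MonotoneOn (g₁ + g₃) (Set.Ici 0))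
    {a b c l₁ l₂ l₃ s : ℝ} (ha : 0 ≤ a) (hb : 0 ≤ b) (hc : 0 ≤ c)
    (hl₁ : 0 < l₁) (hl₂ : 0 < l₂) (hl₃ : 0 < l₃) (hsum : l₁ + l₂ + l₃ = 1) (hs : 0 < s)
    (hmin : ∀ t : ℝ, 0 ≤ t → l₁ * (s - a) ^ 2 + l₂ * (s + b) ^ 2 + l₃ * (s + c) ^ 2 ≤
      l₁ * (t - a) ^ 2 + l₂ * (t + b) ^ 2 + l₃ * (t + c) ^ 2) :
    g₁ s ≤ l₁ * g₁ a + l₂ * g₂ b + l₃ * g₃ c := by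
  have hsm := eq_max_of_minimal hsum hs.le hmin
  have hs' : s = l₁ * a - l₂ * b - l₃ * c := by
    rcases max_choice 0 (l₁ * a - l₂ * b - l₃ * c) with h | h <;> linarith
  have hB : 0 ≤ l₂ * b := by positivity
  have hC : 0 ≤ l₃ * c := by positivity
  have e1 := add_slopeZero_mul_le h₁ h₂ h12 hs (add_nonneg hB hC)
  rw [show s + (l₂ * b + l₃ * c) = l₁ * a by linarith] at e1
  have e2 : g₁ (l₁ * a) ≤ l₁ * g₁ a + (1 - l₁) * g₁ 0 := by
    have := h₁.2 (Set.mem_Ici.2 ha) (Set.self_mem_Ici (a := (0 : ℝ))) hl₁.le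
      (show 0 ≤ 1 - l₁ by linarith) (by ring)
    simpa using this
  have p12 := mul_nonneg (slopeZero_add_nonneg h₁ h₂ h12) hB
  have p13 := mul_nonneg (slopeZero_add_nonneg h₁ h₃ h13) hC
  have m2 := mul_le_mul_of_nonneg_left
    (slopeZero_mul_le h₂ h₁ (by rwa [add_comm]) hb) hl₂.le
  have m3 := mul_le_mul_of_nonneg_left
    (slopeZero_mul_le h₃ h₁ (by rwa [add_comm]) hc) hl₃.le
  rw [← h012] at m2
  rw [← h013] at m3
  have hk : (1 - l₁) * g₁ 0 = l₂ * g₁ 0 + l₃ * g₁ 0 := by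
    linear_combination (-g₁ 0) * hsum
  linarith

/-- Jensen's inequality when the barycenter is the origin, which amounts to the triangle inequalities
between `l₁ a`, `l₂ b`, `l₃ c`. -/
lemma jensen_origin {g₁ g₂ g₃ : ℝ → ℝ} (h₁ : ConvexOn ℝ (Set.Ici 0) g₁)
    (h₂ : ConvexOn ℝ (Set.Ici 0) g₂) (h₃ : ConvexOn ℝ (Set.Ici 0) g₃)
    (h012 : g₁ 0 = g₂ 0) (h013 : g₁ 0 = g₃ 0)
    (h12 : MonotoneOn (g₁ + g₂) (Set.Ici 0)) (h13 : MonotoneOn (g₁ + g₃) (Set.Ici 0))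
    (h23 : MonotoneOn (g₂ + g₃) (Set.Ici 0))
    {a b c l₁ l₂ l₃ : ℝ} (ha : 0 ≤ a) (hb : 0 ≤ b) (hc : 0 ≤ c)
    (hl₁ : 0 < l₁) (hl₂ : 0 < l₂) (hl₃ : 0 < l₃) (hsum : l₁ + l₂ + l₃ = 1)
    (hA : l₁ * a ≤ l₂ * b + l₃ * c) (hB : l₂ * b ≤ l₁ * a + l₃ * c)
    (hC : l₃ * c ≤ l₁ * a + l₂ * b) :
    g₁ 0 ≤ l₁ * g₁ a + l₂ * g₂ b + l₃ * g₃ c := by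
  -- The coefficients `u, v, w ≥ 0` with `l₁ a = (u + v) / 2`, `l₂ b = (u + w) / 2`,
  -- `l₃ c = (v + w) / 2` turn `∑ pᵢ lᵢ xᵢ` into a combination of the sums `pᵢ + pⱼ`.
  have p12 := mul_nonneg (slopeZero_add_nonneg h₁ h₂ h12) (sub_nonneg.2 hC)
  have p13 := mul_nonneg (slopeZero_add_nonneg h₁ h₃ h13) (sub_nonneg.2 hB)
  have p23 := mul_nonneg (slopeZero_add_nonneg h₂ h₃ h23) (sub_nonneg.2 hA)
  have m1 := mul_le_mul_of_nonneg_left (slopeZero_mul_le h₁ h₂ h12 ha) hl₁.le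
  have m2 := mul_le_mul_of_nonneg_left (slopeZero_mul_le h₂ h₃ h23 hb) hl₂.le
  have m3 := mul_le_mul_of_nonneg_left
    (slopeZero_mul_le h₃ h₁ (by rwa [add_comm]) hc) hl₃.le
  rw [← h012] at m2
  rw [← h013] at m3
  have hk : g₁ 0 = l₁ * g₁ 0 + l₂ * g₁ 0 + l₃ * g₁ 0 := by
    linear_combination (-g₁ 0) * hsum
  linarith

lemma spiderDist_same {K : Type*} (i : K) (r s : ℝ) : spiderDist (i, r) (i, s) = |r - s| := by
  simp [spiderDist]

lemma spiderDist_ne {K : Type*} {i j : K} (hij : i ≠ j) {r s : ℝ} (hr : 0 ≤ r) (hs : 0 ≤ s) :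
    spiderDist (i, r) (j, s) = r + s := by
  simp [spiderDist, hij, abs_of_nonneg hr, abs_of_nonneg hs]

/-- Convexity on the tripod: with `f₁, f₂, f₃` convex on `[0,∞)`, agreeing at `0`, and
with pairwise sums nondecreasing on `[0,∞)`, the function `f(i,r) = fᵢ(r)` on the
tripod satisfies Jensen's inequality at the barycenter: if `y` minimizes
`z ↦ ∑ᵢ λᵢ d(z,xᵢ)²` over the tripod, then `f(y) ≤ λ₁ f₁(a) + λ₂ f₂(b) + λ₃ f₃(c)`. -/
theorem tripod_convexity (f₁ f₂ f₃ : ℝ → ℝ)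
    (h₁ : ConvexOn ℝ (Set.Ici 0) f₁) (h₂ : ConvexOn ℝ (Set.Ici 0) f₂)
    (h₃ : ConvexOn ℝ (Set.Ici 0) f₃)
    (h012 : f₁ 0 = f₂ 0) (h023 : f₂ 0 = f₃ 0)
    (h12 : MonotoneOn (f₁ + f₂) (Set.Ici 0))
    (h13 : MonotoneOn (f₁ + f₃) (Set.Ici 0))
    (h23 : MonotoneOn (f₂ + f₃) (Set.Ici 0))
    (f : Fin 3 × ℝ → ℝ)
    (hf : ∀ r : ℝ, f (0, r) = f₁ r ∧ f (1, r) = f₂ r ∧ f (2, r) = f₃ r)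
    (a b c : ℝ) (ha : 0 ≤ a) (hb : 0 ≤ b) (hc : 0 ≤ c)
    (l₁ l₂ l₃ : ℝ) (hl₁ : 0 < l₁) (hl₂ : 0 < l₂) (hl₃ : 0 < l₃)
    (hsum : l₁ + l₂ + l₃ = 1)
    (y : Fin 3 × ℝ) (hy : 0 ≤ y.2)
    (hmin : ∀ z : Fin 3 × ℝ, 0 ≤ z.2 →
      l₁ * spiderDist y ((0 : Fin 3), a) ^ 2 + l₂ * spiderDist y ((1 : Fin 3), b) ^ 2
          + l₃ * spiderDist y ((2 : Fin 3), c) ^ 2 ≤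
        l₁ * spiderDist z ((0 : Fin 3), a) ^ 2 + l₂ * spiderDist z ((1 : Fin 3), b) ^ 2
          + l₃ * spiderDist z ((2 : Fin 3), c) ^ 2) :
    f y ≤ l₁ * f₁ a + l₂ * f₂ b + l₃ * f₃ c := by
  obtain ⟨j, s⟩ := y
  dsimp only at hy
  set F : Fin 3 × ℝ → ℝ := fun z => l₁ * spiderDist z ((0 : Fin 3), a) ^ 2
    + l₂ * spiderDist z ((1 : Fin 3), b) ^ 2 + l₃ * spiderDist z ((2 : Fin 3), c) ^ 2 with hF
  have hmin' : ∀ i t, 0 ≤ t → F (j, s) ≤ F (i, t) := fun i t ht => hmin (i, t) ht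
  have F0 : ∀ t, 0 ≤ t → F (0, t) = l₁ * (t - a) ^ 2 + l₂ * (t + b) ^ 2 + l₃ * (t + c) ^ 2 := by
    intro t ht
    simp only [hF]
    rw [spiderDist_same, spiderDist_ne (show (0 : Fin 3) ≠ 1 by decide) ht hb,
      spiderDist_ne (show (0 : Fin 3) ≠ 2 by decide) ht hc, sq_abs]
  have F1 : ∀ t, 0 ≤ t → F (1, t) = l₂ * (t - b) ^ 2 + l₁ * (t + a) ^ 2 + l₃ * (t + c) ^ 2 := by
    intro t ht
    simp only [hF]
    rw [spiderDist_same, spiderDist_ne (show (1 : Fin 3) ≠ 0 by decide) ht ha,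
      spiderDist_ne (show (1 : Fin 3) ≠ 2 by decide) ht hc, sq_abs]
    ring
  have F2 : ∀ t, 0 ≤ t → F (2, t) = l₃ * (t - c) ^ 2 + l₁ * (t + a) ^ 2 + l₂ * (t + b) ^ 2 := by
    intro t ht
    simp only [hF]
    rw [spiderDist_same, spiderDist_ne (show (2 : Fin 3) ≠ 0 by decide) ht ha,
      spiderDist_ne (show (2 : Fin 3) ≠ 1 by decide) ht hb, sq_abs]
    ring
  have h21 : MonotoneOn (f₂ + f₁) (Set.Ici 0) := by rwa [add_comm]
  have h31 : MonotoneOn (f₃ + f₁) (Set.Ici 0) := by rwa [add_comm]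
  have h32 : MonotoneOn (f₃ + f₂) (Set.Ici 0) := by rwa [add_comm]
  have hj : j = 0 ∨ j = 1 ∨ j = 2 := by
    fin_cases j <;> simp
  rcases hy.eq_or_lt with hs | hs
  · subst hs
    -- The points `(0,0)`, `(1,0)`, `(2,0)` all represent the origin, so the origin is optimal on
    -- each of the three legs.
    have e1 := F0 0 le_rfl
    have e2 := F1 0 le_rfl
    have e3 := F2 0 le_rfl
    have hF0 : F (j, 0) = l₁ * a ^ 2 + l₂ * b ^ 2 + l₃ * c ^ 2 := by
      rcases hj with rfl | rfl | rfl <;> linarith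
    have m1 := eq_max_of_minimal (a := a) (b := b) (c := c) hsum le_rfl fun t ht => by
      have := hmin' 0 t ht
      rw [F0 t ht] at this
      linarith
    have m2 := eq_max_of_minimal (a := b) (b := a) (c := c) (l₁ := l₂) (l₂ := l₁) (l₃ := l₃)
      (by linarith) le_rfl fun t ht => by
        have := hmin' 1 t ht
        rw [F1 t ht] at this
        linarith
    have m3 := eq_max_of_minimal (a := c) (b := a) (c := b) (l₁ := l₃) (l₂ := l₁) (l₃ := l₂)
      (by linarith) le_rfl fun t ht => by
        have := hmin' 2 t ht
        rw [F2 t ht] at this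
        linarith
    have n1 := left_eq_sup.1 m1
    have n2 := left_eq_sup.1 m2
    have n3 := left_eq_sup.1 m3
    have hf0 : f (j, 0) = f₁ 0 := by
      obtain ⟨q1, q2, q3⟩ := hf 0
      rcases hj with rfl | rfl | rfl <;> linarith
    rw [hf0]
    exact jensen_origin h₁ h₂ h₃ h012 (h012.trans h023) h12 h13 h23 ha hb hc hl₁ hl₂ hl₃ hsum
      (by linarith) (by linarith) (by linarith)
  · rcases hj with rfl | rfl | rfl
    · rw [(hf s).1]
      refine jensen_leg h₁ h₂ h₃ h012 (h012.trans h023) h12 h13 ha hb hc hl₁ hl₂ hl₃ hsum hs ?_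
      intro t ht
      rw [← F0 t ht, ← F0 s hy]
      exact hmin' 0 t ht
    · rw [(hf s).2.1]
      have := jensen_leg h₂ h₁ h₃ h012.symm h023 h21 h23 hb ha hc hl₂ hl₁ hl₃ (by linarith) hs
        fun t ht => by
          rw [← F1 t ht, ← F1 s hy]
          exact hmin' 1 t ht
      linarith
    · rw [(hf s).2.2]
      have := jensen_leg h₃ h₁ h₂ (h012.trans h023).symm h023.symm h31 h32 hc ha hb hl₃ hl₁ hl₂
        (by linarith) hs fun t ht => by
          rw [← F2 t ht, ← F2 s hy]
          exact hmin' 2 t ht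
      linarith
end
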